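/- arXiv:1704.01847 — 3 statements merged into one kernel-verified Lean document; each statement's English description precedes it below -/
import Mathlib

section
/- Let (𝒳, d) be a metric space and μ a Borel probability measure on 𝒳. A point x̂ ∈ 𝒳 is a mode of μ (i.e., μ admits a fictitious density f with f(x̂) = sup_{x ∈ 𝒳} f(x)) if and only if μ(B(x̂, ε)) > 0 for every ε > 0 and, for every x ∈ 𝒳, the limit lim_{ε↓0} μ(B(x, ε)) / μ(B(x̂, ε)) exists and is at most 1. -/
open MeasureTheory Filter

/-!
Dividing two ball-mass asymptotics cancels the gauge `g`, so the ratio of small-ball masses at `y`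
and `x` tends to `f y / f x` whenever `f x ≠ 0`; at a maximiser `x` of `f` this limit is at most
`1`. Conversely, the ball masses at `x` themselves serve as a gauge, for which the limiting ratios
form a fictitious density with value `1` at `x`.
-/

open Metric Set Topology

section

variable {X : Type*} [PseudoMetricSpace X] [MeasurableSpace X] {μ : Measure X} {f : X → ℝ} {x : X}

/-- `f` is a fictitious density of `μ`: a nonnegative function, somewhere positive, giving the
asymptotics of the masses of small balls relative to a common positive gauge `g`. Only the values of
`g` on `(0, ∞)` matter; it is encoded as a function on all of `ℝ`. -/
def IsFictitiousDensity (μ : Measure X) (f : X → ℝ) : Prop :=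
  (∀ x, 0 ≤ f x) ∧ (∃ x, 0 < f x) ∧
    ∃ g : ℝ → ℝ, (∀ ε > 0, 0 < g ε) ∧
      ∀ x, Tendsto (fun ε => μ.real (ball x ε) / g ε) (𝓝[>] 0) (𝓝 (f x))

/-- `x` is a mode of `μ`: some fictitious density of `μ` attains its supremum at `x`. -/
def IsMode (μ : Measure X) (x : X) : Prop :=
  ∃ f, IsFictitiousDensity μ f ∧ ∀ y, f y ≤ f x

namespace IsFictitiousDensity

theorem of_eventually_pos {g : ℝ → ℝ} (hg : ∀ᶠ ε in 𝓝[>] 0, 0 < g ε)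
    (hlim : ∀ x, Tendsto (fun ε => μ.real (ball x ε) / g ε) (𝓝[>] 0) (𝓝 (f x)))
    (hf : ∃ x, 0 < f x) : IsFictitiousDensity μ f := by
  refine ⟨fun x => ge_of_tendsto (hlim x) ?_, hf, fun ε => if 0 < g ε then g ε else 1, ?_, ?_⟩
  · filter_upwards [hg] with ε hε
    positivity
  · intro ε _
    dsimp only
    split_ifs with hε
    exacts [hε, one_pos]
  · refine fun x => (hlim x).congr' ?_
    filter_upwards [hg] with ε hε
    rw [if_pos hε]

theorem measure_ball_pos (hf : IsFictitiousDensity μ f) (hx : 0 < f x) {ε : ℝ} (hε : 0 < ε) :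
    0 < μ (ball x ε) := by
  obtain ⟨-, -, g, -, hlim⟩ := hf
  have ratio_pos : ∀ᶠ δ in 𝓝[>] 0, 0 < μ.real (ball x δ) / g δ := (hlim x).eventually_const_lt hx
  obtain ⟨δ, hδ, hδε⟩ := (ratio_pos.and (Ioo_mem_nhdsGT hε)).exists
  have small_ball_ne_zero : μ (ball x δ) ≠ 0 := fun h => by simp [measureReal_def, h] at hδ
  exact small_ball_ne_zero.pos.trans_le (measure_mono (ball_subset_ball hδε.2.le))

theorem tendsto_measureReal_ball_div (hf : IsFictitiousDensity μ f) (hx : f x ≠ 0) (y : X) :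
    Tendsto (fun ε => μ.real (ball y ε) / μ.real (ball x ε)) (𝓝[>] 0) (𝓝 (f y / f x)) := by
  obtain ⟨-, -, g, hg, hlim⟩ := hf
  refine ((hlim y).div (hlim x) hx).congr' ?_
  filter_upwards [self_mem_nhdsWithin] with ε hε
  exact div_div_div_cancel_right₀ (hg ε hε).ne' _ _

end IsFictitiousDensity

theorem eventually_measureReal_ball_pos [IsLocallyFiniteMeasure μ]
    (hx : ∀ ε > 0, 0 < μ (ball x ε)) : ∀ᶠ ε in 𝓝[>] 0, 0 < μ.real (ball x ε) := by
  obtain ⟨r, hr, hfin⟩ := (μ.finiteAt_nhds x).exists_mem_basis nhds_basis_ball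
  filter_upwards [Ioo_mem_nhdsGT hr] with ε hε
  exact ENNReal.toReal_pos (hx ε hε.1).ne'
    (measure_ne_top_of_subset (ball_subset_ball hε.2.le) hfin.ne)

theorem tendsto_measureReal_ball_div_self [IsLocallyFiniteMeasure μ]
    (hx : ∀ ε > 0, 0 < μ (ball x ε)) :
    Tendsto (fun ε => μ.real (ball x ε) / μ.real (ball x ε)) (𝓝[>] 0) (𝓝 1) := by
  refine tendsto_const_nhds.congr' ?_
  filter_upwards [eventually_measureReal_ball_pos hx] with ε hε
  exact (div_self hε.ne').symm

theorem stmt0_general (μ : Measure X) [IsLocallyFiniteMeasure μ] (x : X) :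
    IsMode μ x ↔ (∀ ε > 0, 0 < μ (ball x ε)) ∧ ∀ y, ∃ L ≤ 1,
      Tendsto (fun ε => μ.real (ball y ε) / μ.real (ball x ε)) (𝓝[>] 0) (𝓝 L) := by
  constructor
  · rintro ⟨f, hf, hmax⟩
    obtain ⟨y₀, hy₀⟩ := hf.2.1
    have hx : 0 < f x := hy₀.trans_le (hmax y₀)
    exact ⟨fun ε hε => hf.measure_ball_pos hx hε, fun y =>
      ⟨f y / f x, (div_le_one hx).mpr (hmax y), hf.tendsto_measureReal_ball_div hx.ne' y⟩⟩
  · rintro ⟨hpos, hlim⟩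
    choose f f_le_one hf using hlim
    have f_self : f x = 1 := tendsto_nhds_unique (hf x) (tendsto_measureReal_ball_div_self hpos)
    refine ⟨f, .of_eventually_pos (eventually_measureReal_ball_pos hpos) hf ⟨x, ?_⟩, fun y => ?_⟩
    · exact f_self ▸ one_pos
    · exact f_self ▸ f_le_one y

end

/-- A point `xh` of a metric space is a mode of a Borel probability
measure `μ` (i.e. `μ` admits a fictitious density attaining its supremum at `xh`)
iff every ball around `xh` has positive measure and, for every `x`, the limit of
`μ(B(x,ε))/μ(B(xh,ε))` as `ε ↓ 0` exists and is at most `1`. -/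
theorem stmt0 {X : Type*} [MetricSpace X] [MeasurableSpace X] [BorelSpace X]
    (μ : Measure X) [IsProbabilityMeasure μ] (xh : X) :
    (∃ f : X → ℝ, (∀ x, 0 ≤ f x) ∧ (∃ x, 0 < f x) ∧
      (∃ g : ℝ → ℝ, (∀ ε > (0:ℝ), 0 < g ε) ∧
        ∀ x, Tendsto (fun ε => (μ (Metric.ball x ε)).toReal / g ε)
          (nhdsWithin 0 (Set.Ioi 0)) (nhds (f x))) ∧
      (∀ x, f x ≤ f xh)) ↔
    ((∀ ε > (0:ℝ), 0 < μ (Metric.ball xh ε)) ∧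
      ∀ x : X, ∃ L : ℝ, L ≤ 1 ∧
        Tendsto (fun ε => (μ (Metric.ball x ε)).toReal / (μ (Metric.ball xh ε)).toReal)
          (nhdsWithin 0 (Set.Ioi 0)) (nhds L)) := by
  simpa only [IsMode, IsFictitiousDensity, and_assoc, measureReal_def] using
    stmt0_general μ xh
end

section
/- Let 𝒳 be a first-countable topological space, and let {f_i}_{i=1}^∞, f_i : 𝒳 → ℝ̄, be a sequence of functions that hypo-converges to f : 𝒳 → ℝ̄. Suppose 𝒩 ⊆ ℕ is an infinite set of indices, for each i ∈ 𝒩 the point x_i* ∈ 𝒳 is a maximizer of f_i (i.e., f_i(x_i*) = sup_{x ∈ 𝒳} f_i(x)), and the subsequence (x_i*)_{i ∈ 𝒩} converges to a point x* ∈ 𝒳. Then x* is a maximizer of f, i.e., f(x*) = sup_{x ∈ 𝒳} f(x). -/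
open Filter

/-!
A recovery sequence `x` for `x₀` gives `g x₀ ≤ liminf (f i (x i))`, and `f i (x i) ≤ f i (y i)`
whenever `y i` maximizes `f i`. If `y` converges to `a` and this happens for infinitely many `i`,
then `liminf (f i (x i)) ≤ limsup (f i (y i)) ≤ g a`, so `a` maximizes `g`. Maximizers known only
along a subsequence are completed to such a `y` by taking the value `a` at the missing indices.
-/

open scoped Topology

theorem tendsto_extend_cofinite {ι κ α : Type*} {u : κ → α} {v : ι → α} {l : Filter α}
    (φ : κ → ι) (hu : Tendsto u cofinite l) (hv : Tendsto v cofinite l) :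
    Tendsto (Function.extend φ u v) cofinite l := by
  intro U hU
  have hu_fin : {k | u k ∉ U}.Finite := hu hU
  have hv_fin : {i | v i ∉ U}.Finite := hv hU
  refine ((hu_fin.image φ).union hv_fin).subset fun i hi => ?_
  change Function.extend φ u v i ∉ U at hi
  classical
  rw [Function.extend_def] at hi
  split_ifs at hi with hrange
  · exact .inl ⟨hrange.choose, hi, hrange.choose_spec⟩
  · exact .inr hi

/-- Hypo-convergence of `f i` to `g` along the filter `l`. Both conditions quantify over families
of points with the same index type as `f`, so that `ι = ℕ`, `l = atTop` (which is `cofinite` on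
`ℕ`) is the notion for sequences. -/
structure HypoTendsto {ι X L : Type*} [TopologicalSpace X] [CompleteLattice L]
    (f : ι → X → L) (l : Filter ι) (g : X → L) : Prop where
  limsup_le : ∀ (x : ι → X) (x₀ : X), Tendsto x l (𝓝 x₀) → limsup (fun i => f i (x i)) l ≤ g x₀
  exists_le_liminf : ∀ x₀ : X, ∃ x : ι → X, Tendsto x l (𝓝 x₀) ∧
    g x₀ ≤ liminf (fun i => f i (x i)) l

section Maximizers

variable {ι κ X L : Type*} [TopologicalSpace X] [CompleteLinearOrder L]
  {f : ι → X → L} {g : X → L} {a : X}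

theorem HypoTendsto.eq_iSup_of_frequently_eq_iSup {l : Filter ι} (hf : HypoTendsto f l g)
    {y : ι → X} (hy : Tendsto y l (𝓝 a)) (hmax : ∃ᶠ i in l, f i (y i) = ⨆ x, f i x) :
    g a = ⨆ x, g x := by
  refine le_antisymm (le_iSup g a) (iSup_le fun x₀ => ?_)
  obtain ⟨x, -, hx⟩ := hf.exists_le_liminf x₀
  have hxy : ∃ᶠ i in l, f i (x i) ≤ f i (y i) :=
    hmax.mono fun i hi => hi ▸ le_iSup (f i) (x i)
  calc g x₀ ≤ liminf (fun i => f i (x i)) l := hx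
    _ ≤ limsup (fun i => f i (y i)) l := liminf_le_limsup_of_frequently_le hxy
    _ ≤ g a := hf.limsup_le y a hy

theorem stmt3_general [Infinite κ] (hf : HypoTendsto f cofinite g) {φ : κ → ι}
    (hφ : Function.Injective φ) {u : κ → X} (hmax : ∀ k, f (φ k) (u k) = ⨆ x, f (φ k) x)
    (hu : Tendsto u cofinite (𝓝 a)) : g a = ⨆ x, g x := by
  have hy : Tendsto (Function.extend φ u fun _ => a) cofinite (𝓝 a) :=
    tendsto_extend_cofinite φ hu tendsto_const_nhds
  refine hf.eq_iSup_of_frequently_eq_iSup hy (hφ.tendsto_cofinite.frequently ?_)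
  refine Frequently.of_forall fun k => ?_
  rw [hφ.extend_apply, hmax]

end Maximizers

/-- If a sequence of extended-real-valued functions on a first-countable
space hypo-converges to `flim`, and an (infinite) subsequence of maximizers converges,
then its limit is a maximizer of `flim`. The infinite index set `𝒩 ⊆ ℕ` is encoded by
a strictly monotone enumeration `φ : ℕ → ℕ`. -/
theorem stmt3 {X : Type*} [TopologicalSpace X] [FirstCountableTopology X]
    (f : ℕ → X → EReal) (flim : X → EReal)
    (ha : ∀ (x : ℕ → X) (x₀ : X), Tendsto x atTop (nhds x₀) →
      limsup (fun i => f i (x i)) atTop ≤ flim x₀)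
    (hb : ∀ x₀ : X, ∃ x : ℕ → X, Tendsto x atTop (nhds x₀) ∧
      flim x₀ ≤ liminf (fun i => f i (x i)) atTop)
    (φ : ℕ → ℕ) (hφ : StrictMono φ) (xstar : ℕ → X)
    (hmax : ∀ k, f (φ k) (xstar k) = ⨆ x, f (φ k) x)
    (xlim : X) (hconv : Tendsto xstar atTop (nhds xlim)) :
    flim xlim = ⨆ x, flim x := by
  simp only [← Nat.cofinite_eq_atTop] at ha hb hconv
  exact stmt3_general ⟨ha, hb⟩ hφ.injective hmax hconv
end

section
/- Let x ∈ W²_n, z₀ ∈ ℝ^q and θ ∈ int S, and let (x̃_i, ζ_i, ϑ_i) be a sequence with x̃_i ∈ PL(𝒫_i, ℝⁿ), ζ_i ∈ ℝ^q, ϑ_i ∈ ℝ^m such that lim_{i→∞} (‖x̃_i − x‖_{W²} + |ζ_i − z₀| + |ϑ_i − θ|) = 0. Let z̃_i ∈ PL(𝒫_i, ℝ^q) be the Euler-discretized clean-state path associated with (x̃_i, ζ_i, ϑ_i), and let z ∈ W²_q be the unique solution of the initial value problem ż(t) = h(t, x(t), z(t), θ), z(0) = z₀. Then lim_{i→∞}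 ‖z̃_i − z‖_∞ = 0. -/
open MeasureTheory Filter Set

/-!
Write the clean-state equation as `ż = f(t, z)` with `f(t, v) = h(t, x(t), v, θ)`; the discretized
path is then the Euler path of the perturbed field `F_i(t, v) = h(t, x̃_i(t), v, ϑ_i)`. Convergence
in `W²` implies uniform convergence of `x̃_i` by Cauchy–Schwarz, so the Lipschitz bound and the
modulus of `h` make `F_i → f` uniformly in `(t, v)`. On each step the error is driven by `F_i - f`,
by the oscillation of the continuous map `t ↦ f(t, z(t))` over that step, and by the Lipschitz
constant times the error at the last node; a discrete Grönwall inequality sums these contributions.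
-/

open scoped Topology

/-- `t 0, …, t N` are the nodes of a partition of `[a, b]`; the values of `t` beyond `N` are
irrelevant. -/
structure IsPartition (a b : ℝ) (N : ℕ) (t : ℕ → ℝ) : Prop where
  node_zero : t 0 = a
  node_last : t N = b
  node_lt_succ : ∀ k < N, t k < t (k + 1)

/-- The largest step size of the partition with nodes `t 0, …, t N`; it is `0` if `N = 0`. -/
noncomputable def mesh (N : ℕ) (t : ℕ → ℝ) : ℝ :=
  ⨆ k : Fin N, (t (k.1 + 1) - t k.1)

/-- `y` is the piecewise affine Euler path of the time-dependent vector field `F` started at `ζ`,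
on the partition with nodes `t 0, …, t N`. -/
structure IsEulerPath {E : Type*} [AddCommGroup E] [Module ℝ E] (F : ℝ → E → E) (N : ℕ)
    (t : ℕ → ℝ) (ζ : E) (y : ℝ → E) : Prop where
  apply_node_zero : y (t 0) = ζ
  step : ∀ k < N, ∀ s ∈ Ioc (t k) (t (k + 1)), y s = y (t k) + (s - t k) • F (t k) (y (t k))

/-- `u` belongs to the Sobolev space `W²` on `[a, b]`, with derivative `u'`: it is the primitive of
the square integrable function `u'`. -/
structure HasW2Deriv {E : Type*} [NormedAddCommGroup E] [NormedSpace ℝ E] (a b : ℝ)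
    (u u' : ℝ → E) : Prop where
  memLp : MemLp u' 2 (volume.restrict (Ioc a b))
  eq_add_integral : ∀ t ∈ Icc a b, u t = u a + ∫ s in Ioc a t, u' s

/-- The `W²` norm on `[a, b]` of a function `u` with derivative `u'`. -/
noncomputable def w2Norm {E : Type*} [NormedAddCommGroup E] (a b : ℝ) (u u' : ℝ → E) : ℝ :=
  √(‖u a‖ ^ 2 + ∫ s in Ioc a b, ‖u' s‖ ^ 2)

section Partition

variable {a b : ℝ} {N : ℕ} {t : ℕ → ℝ}

lemma IsPartition.monotoneOn (ht : IsPartition a b N t) : MonotoneOn t (Iic N) :=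
  monotoneOn_of_le_add_one ordConnected_Iic fun k _ _ hk => (ht.node_lt_succ k hk).le

lemma IsPartition.node_mem_Icc (ht : IsPartition a b N t) {k : ℕ} (hk : k ≤ N) :
    t k ∈ Icc a b := by
  constructor
  · rw [← ht.node_zero]
    exact ht.monotoneOn (mem_Iic.2 N.zero_le) hk k.zero_le
  · rw [← ht.node_last]
    exact ht.monotoneOn hk self_mem_Iic hk

lemma IsPartition.Icc_node_subset (ht : IsPartition a b N t) {k : ℕ} (hk : k < N) :
    Icc (t k) (t (k + 1)) ⊆ Icc a b :=
  Icc_subset_Icc (ht.node_mem_Icc hk.le).1 (ht.node_mem_Icc hk).2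

lemma sub_le_mesh {k : ℕ} (hk : k < N) : t (k + 1) - t k ≤ mesh N t :=
  le_ciSup (f := fun k : Fin N => t (k.1 + 1) - t k.1) (finite_range _).bddAbove ⟨k, hk⟩

lemma IsPartition.integrableOn_of_piecewise_const {E : Type*} [NormedAddCommGroup E]
    (ht : IsPartition a b N t) {d : ℝ → E}
    (hd : ∀ k < N, ∃ c, ∀ s ∈ Ico (t k) (t (k + 1)), d s = c) : IntegrableOn d (Ioc a b) := by
  have hab : a ≤ b := nonempty_Icc.1 ⟨t 0, ht.node_mem_Icc N.zero_le⟩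
  rw [← intervalIntegrable_iff_integrableOn_Ioc_of_le hab, ← ht.node_zero, ← ht.node_last]
  refine IntervalIntegrable.trans_iterate_Ico N.zero_le fun k hk => ?_
  obtain ⟨c, hc⟩ := hd k hk.2
  refine (intervalIntegrable_const (c := c)).congr_uIoo fun s hs => ?_
  rw [uIoo_of_le (ht.node_lt_succ k hk.2).le] at hs
  exact (hc s (Ioo_subset_Ico_self hs)).symm

lemma IsPartition.le_mul_exp_of_forall_step_le (ht : IsPartition a b N t) {e : ℝ → ℝ} {K δ ε : ℝ}
    (hK : 0 ≤ K) (hδ : 0 ≤ δ) (hε : 0 ≤ ε) (he_init : e a ≤ δ)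
    (he_step : ∀ k < N, ∀ s ∈ Ioc (t k) (t (k + 1)),
      e s ≤ e (t k) + (ε + K * e (t k)) * (s - t k)) :
    ∀ s ∈ Icc a b, e s ≤ (δ + ε * (s - a)) * Real.exp (K * (s - a)) := by
  suffices he_node : ∀ k ≤ N, ∀ s ∈ Icc a (t k),
      e s ≤ (δ + ε * (s - a)) * Real.exp (K * (s - a)) by
    simpa only [ht.node_last] using he_node N le_rfl
  intro k
  induction k with
  | zero =>
    intro _ s hs
    rw [ht.node_zero, Icc_self, mem_singleton_iff] at hs
    simpa [hs] using he_init
  | succ k ih =>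
    intro hk s hs
    obtain hsk | hsk := le_or_gt s (t k)
    · exact ih (by lia) s ⟨hs.1, hsk⟩
    have hak : a ≤ t k := (ht.node_mem_Icc (by lia)).1
    have hΔ : 0 ≤ s - t k := by linarith
    have hka : 0 ≤ t k - a := by linarith
    have hexp_one : 1 ≤ Real.exp (K * (s - a)) :=
      Real.one_le_exp (mul_nonneg hK (by linarith))
    have hexp_add : Real.exp (K * (s - a)) =
        Real.exp (K * (t k - a)) * Real.exp (K * (s - t k)) := by
      rw [← Real.exp_add]
      ring_nf
    have he_k := ih (by lia) (t k) ⟨hak, le_rfl⟩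
    calc e s ≤ e (t k) * (K * (s - t k) + 1) + ε * (s - t k) := by
          linarith [he_step k hk s ⟨hsk, hs.2⟩]
      _ ≤ (δ + ε * (t k - a)) * Real.exp (K * (t k - a)) * Real.exp (K * (s - t k)) +
            ε * (s - t k) * Real.exp (K * (s - a)) := by
          refine add_le_add (mul_le_mul he_k (Real.add_one_le_exp _) ?_ ?_) ?_
          · exact add_nonneg (mul_nonneg hK hΔ) zero_le_one
          · exact mul_nonneg (add_nonneg hδ (mul_nonneg hε hka)) (Real.exp_nonneg _)
          · exact le_mul_of_one_le_right (mul_nonneg hε hΔ) hexp_one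
      _ = (δ + ε * (s - a)) * Real.exp (K * (s - a)) := by
          rw [hexp_add]
          ring

end Partition

section Euler

variable {E : Type*} [NormedAddCommGroup E] [NormedSpace ℝ E]

lemma hasDerivWithinAt_of_eq_add_setIntegral [CompleteSpace E] {a b : ℝ} {g z : ℝ → E} {z₀ : E}
    (hg : ContinuousOn g (Icc a b)) (hz : ∀ t ∈ Icc a b, z t = z₀ + ∫ s in Ioc a t, g s) :
    ∀ t ∈ Icc a b, HasDerivWithinAt z (g t) (Icc a b) t := by
  intro t ht
  have hab : a ≤ b := ht.1.trans ht.2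
  have hpicard := ODE.hasDerivWithinAt_picard_Icc (f := fun s _ => g s) (α := 0) (u := univ)
    (left_mem_Icc.2 hab) (hg.comp continuousOn_fst fun _ hp => hp.1)
    continuousOn_const (fun _ _ => mem_univ _) z₀ ht
  refine hpicard.congr_of_mem (fun s hs => ?_) ht
  rw [hz s hs, ODE.picard_apply, intervalIntegral.integral_of_le hs.1]

lemma norm_sub_sub_smul_le_of_hasDerivWithinAt {z g : ℝ → E} {c s C : ℝ} {v : E} (hcs : c ≤ s)
    (hz : ∀ r ∈ Icc c s, HasDerivWithinAt z (g r) (Icc c s) r)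
    (hg : ∀ r ∈ Icc c s, ‖g r - v‖ ≤ C) : ‖z s - z c - (s - c) • v‖ ≤ C * (s - c) := by
  have hderiv : ∀ r ∈ Icc c s,
      HasDerivWithinAt (fun r => z r - r • v) (g r - v) (Icc c s) r := fun r hr => by
    simpa using (hz r hr).fun_sub ((hasDerivWithinAt_id r _).smul_const v)
  convert norm_image_sub_le_of_norm_deriv_le_segment' hderiv
    (fun r hr => hg r (Ico_subset_Icc_self hr)) s (right_mem_Icc.2 hcs) using 2
  module

variable {a b : ℝ} {f : ℝ → E → E} {K : NNReal} {z : ℝ → E}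

lemma IsEulerPath.norm_sub_le {F : ℝ → E → E} {N : ℕ} {t : ℕ → ℝ} {ζ : E} {y : ℝ → E}
    {ε₁ ε₂ : ℝ} (hy : IsEulerPath F N t ζ y) (ht : IsPartition a b N t)
    (hf : ∀ s ∈ Icc a b, LipschitzWith K (f s))
    (hz : ∀ s ∈ Icc a b, HasDerivWithinAt z (f s (z s)) (Icc a b) s)
    (hε₁ : 0 ≤ ε₁) (hε₂ : 0 ≤ ε₂)
    (hosc : ∀ k < N, ∀ r ∈ Icc (t k) (t (k + 1)), ‖f r (z r) - f (t k) (z (t k))‖ ≤ ε₁)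
    (hF : ∀ s ∈ Icc a b, ∀ v, ‖f s v - F s v‖ ≤ ε₂) :
    ∀ s ∈ Icc a b, ‖y s - z s‖ ≤
      (‖ζ - z a‖ + (ε₁ + ε₂) * (s - a)) * Real.exp (K * (s - a)) := by
  refine ht.le_mul_exp_of_forall_step_le K.coe_nonneg (norm_nonneg _) (add_nonneg hε₁ hε₂)
    (by rw [← ht.node_zero, hy.apply_node_zero]) fun k hk s hs => ?_
  have hk_mem : t k ∈ Icc a b := ht.node_mem_Icc hk.le
  have hsub : Icc (t k) s ⊆ Icc (t k) (t (k + 1)) := Icc_subset_Icc_right hs.2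
  have hfield : ∀ r ∈ Icc (t k) s,
      ‖f r (z r) - F (t k) (y (t k))‖ ≤ ε₁ + ε₂ + K * ‖y (t k) - z (t k)‖ := fun r hr => by
    have hlip : ‖f (t k) (z (t k)) - f (t k) (y (t k))‖ ≤ K * ‖y (t k) - z (t k)‖ := by
      rw [norm_sub_rev (y _)]
      exact (hf _ hk_mem).norm_sub_le _ _
    calc ‖f r (z r) - F (t k) (y (t k))‖
        = ‖(f r (z r) - f (t k) (z (t k))) + (f (t k) (z (t k)) - f (t k) (y (t k))) +
            (f (t k) (y (t k)) - F (t k) (y (t k)))‖ := by congr 1; abel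
      _ ≤ ε₁ + K * ‖y (t k) - z (t k)‖ + ε₂ :=
          norm_add_le_of_le (norm_add_le_of_le (hosc k hk r (hsub hr)) hlip) (hF _ hk_mem _)
      _ = _ := by ring
  have hlocal := norm_sub_sub_smul_le_of_hasDerivWithinAt hs.1.le
    (fun r hr => (hz r (ht.Icc_node_subset hk (hsub hr))).mono
      (hsub.trans (ht.Icc_node_subset hk))) hfield
  calc ‖y s - z s‖
      = ‖(y (t k) - z (t k)) - (z s - z (t k) - (s - t k) • F (t k) (y (t k)))‖ := by
        rw [hy.step k hk s hs]
        congr 1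
        abel
    _ ≤ _ := norm_sub_le_of_le le_rfl hlocal

theorem tendstoUniformlyOn_of_isEulerPath {ι : Type*} {l : Filter ι} {F : ι → ℝ → E → E}
    {N : ι → ℕ} {t : ι → ℕ → ℝ} {ζ : ι → E} {y : ι → ℝ → E}
    (hy : ∀ i, IsEulerPath (F i) (N i) (t i) (ζ i) (y i))
    (ht : ∀ i, IsPartition a b (N i) (t i))
    (hmesh : Tendsto (fun i => mesh (N i) (t i)) l (𝓝 0))
    (hf : ∀ s ∈ Icc a b, LipschitzWith K (f s))
    (hfz : ContinuousOn (fun s => f s (z s)) (Icc a b))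
    (hz : ∀ s ∈ Icc a b, HasDerivWithinAt z (f s (z s)) (Icc a b) s)
    (hF : TendstoUniformlyOn (fun i (p : ℝ × E) => F i p.1 p.2) (fun p => f p.1 p.2) l
      (Icc a b ×ˢ univ))
    (hζ : Tendsto ζ l (𝓝 (z a))) : TendstoUniformlyOn y z l (Icc a b) := by
  rw [Metric.tendstoUniformlyOn_iff] at hF ⊢
  intro ε hε
  have hbound : Tendsto (fun η : ℝ => (η + (η + η) * (b - a)) * Real.exp (K * (b - a)))
      (𝓝[>] 0) (𝓝 0) :=
    (Continuous.tendsto' (by fun_prop) 0 0 (by simp)).mono_left nhdsWithin_le_nhds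
  obtain ⟨η, hηε, hη⟩ := ((hbound.eventually_lt_const hε).and self_mem_nhdsWithin).exists
  obtain ⟨δ, hδ, hfδ⟩ := Metric.uniformContinuousOn_iff.1
    (isCompact_Icc.uniformContinuousOn_of_continuous hfz) η hη
  filter_upwards [hmesh.eventually_lt_const hδ, hF η hη, Metric.tendsto_nhds.1 hζ η hη]
    with i hi_mesh hi_F hi_ζ s hs
  have hosc : ∀ k < N i, ∀ r ∈ Icc (t i k) (t i (k + 1)),
      ‖f r (z r) - f (t i k) (z (t i k))‖ ≤ η := fun k hk r hr => by
    have hr_dist : dist r (t i k) < δ := by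
      rw [Real.dist_eq, abs_of_nonneg (sub_nonneg.2 hr.1)]
      linarith [hr.2, sub_le_mesh (t := t i) hk]
    rw [← dist_eq_norm]
    exact (hfδ r ((ht i).Icc_node_subset hk hr) _ ((ht i).node_mem_Icc hk.le) hr_dist).le
  have hF_le : ∀ r ∈ Icc a b, ∀ v, ‖f r v - F i r v‖ ≤ η := fun r hr v => by
    rw [← dist_eq_norm]
    exact (hi_F (r, v) ⟨hr, mem_univ v⟩).le
  have hη₀ : 0 ≤ η := le_of_lt hη
  have hsa : 0 ≤ s - a := sub_nonneg.2 hs.1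
  rw [dist_comm, dist_eq_norm]
  rw [dist_eq_norm] at hi_ζ
  calc ‖y i s - z s‖
      ≤ (‖ζ i - z a‖ + (η + η) * (s - a)) * Real.exp (K * (s - a)) :=
        (hy i).norm_sub_le (ht i) hf hz hη₀ hη₀ hosc hF_le s hs
    _ ≤ (η + (η + η) * (b - a)) * Real.exp (K * (b - a)) := by
        have hsb := hs.2
        have hab : 0 ≤ b - a := by linarith
        gcongr
    _ < ε := hηε

end Euler

section Sobolev

lemma integral_norm_le_sqrt_measureReal_mul_sqrt_integral_sq {α E : Type*} [MeasurableSpace α]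
    {μ : Measure α} [IsFiniteMeasure μ] [NormedAddCommGroup E] {g : α → E} (hg : MemLp g 2 μ) :
    ∫ s, ‖g s‖ ∂μ ≤ √(μ.real univ) * √(∫ s, ‖g s‖ ^ 2 ∂μ) := by
  have hholder := integral_mul_le_Lp_mul_Lq_of_nonneg (μ := μ) (f := fun _ => (1 : ℝ))
    (g := fun s => ‖g s‖) Real.HolderConjugate.two_two (ae_of_all _ fun _ => zero_le_one)
    (ae_of_all _ fun s => norm_nonneg (g s)) (memLp_const 1) (by simpa using hg.norm)
  simpa [Real.sqrt_eq_rpow] using hholder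

variable {E : Type*} [NormedAddCommGroup E] [NormedSpace ℝ E] {a b : ℝ} {u u' v v' : ℝ → E}

lemma hasW2Deriv_of_integrableOn (hu' : IntegrableOn u' (Icc a b))
    (hu'_sq : IntegrableOn (fun t => ‖u' t‖ ^ 2) (Icc a b))
    (hu : ∀ t ∈ Icc a b, u t = u a + ∫ s in Ioc a t, u' s) : HasW2Deriv a b u u' where
  memLp := (memLp_two_iff_integrable_sq_norm
    (hu'.mono_set Ioc_subset_Icc_self).aestronglyMeasurable).2 (hu'_sq.mono_set Ioc_subset_Icc_self)
  eq_add_integral := hu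

lemma IsPartition.hasW2Deriv_of_piecewise_const {N : ℕ} {t : ℕ → ℝ} (ht : IsPartition a b N t)
    (hu' : ∀ k < N, ∃ c, ∀ s ∈ Ico (t k) (t (k + 1)), u' s = c)
    (hu : ∀ t ∈ Icc a b, u t = u a + ∫ s in Ioc a t, u' s) : HasW2Deriv a b u u' := by
  refine hasW2Deriv_of_integrableOn ?_ ?_ hu <;> rw [integrableOn_Icc_iff_integrableOn_Ioc]
  · exact ht.integrableOn_of_piecewise_const hu'
  · refine ht.integrableOn_of_piecewise_const fun k hk => ?_
    obtain ⟨c, hc⟩ := hu' k hk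
    exact ⟨‖c‖ ^ 2, fun s hs => by rw [hc s hs]⟩

lemma HasW2Deriv.integrableOn (hu : HasW2Deriv a b u u') : IntegrableOn u' (Ioc a b) :=
  hu.memLp.integrable one_le_two

lemma HasW2Deriv.continuousOn (hu : HasW2Deriv a b u u') : ContinuousOn u (Icc a b) :=
  (continuousOn_const.add (intervalIntegral.continuousOn_primitive
    ((integrableOn_Icc_iff_integrableOn_Ioc).2 hu.integrableOn))).congr hu.eq_add_integral

lemma HasW2Deriv.sub (hu : HasW2Deriv a b u u') (hv : HasW2Deriv a b v v') :
    HasW2Deriv a b (fun t => u t - v t) (fun t => u' t - v' t) where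
  memLp := hu.memLp.sub hv.memLp
  eq_add_integral t ht := by
    have hsub : Ioc a t ⊆ Ioc a b := Ioc_subset_Ioc_right ht.2
    rw [hu.eq_add_integral t ht, hv.eq_add_integral t ht,
      integral_sub (hu.integrableOn.mono_set hsub) (hv.integrableOn.mono_set hsub)]
    abel

lemma HasW2Deriv.norm_le (hu : HasW2Deriv a b u u') {t : ℝ} (ht : t ∈ Icc a b) :
    ‖u t‖ ≤ (1 + √(b - a)) * w2Norm a b u u' := by
  have hsq : 0 ≤ ∫ s in Ioc a b, ‖u' s‖ ^ 2 := integral_nonneg fun s => sq_nonneg _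
  have hinit : ‖u a‖ ≤ w2Norm a b u u' := Real.le_sqrt_of_sq_le (le_add_of_nonneg_right hsq)
  have hderiv : √(∫ s in Ioc a b, ‖u' s‖ ^ 2) ≤ w2Norm a b u u' :=
    Real.sqrt_le_sqrt (le_add_of_nonneg_left (sq_nonneg _))
  have hvolume : (volume.restrict (Ioc a b)).real univ = b - a := by
    rw [measureReal_restrict_apply_univ, Real.volume_real_Ioc_of_le (ht.1.trans ht.2)]
  have hprimitive : ‖∫ s in Ioc a t, u' s‖ ≤ √(b - a) * w2Norm a b u u' :=
    calc ‖∫ s in Ioc a t, u' s‖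
        ≤ ∫ s in Ioc a t, ‖u' s‖ := norm_integral_le_integral_norm _
      _ ≤ ∫ s in Ioc a b, ‖u' s‖ :=
          setIntegral_mono_set hu.integrableOn.norm (ae_of_all _ fun s => norm_nonneg _)
            (Ioc_subset_Ioc_right ht.2).eventuallyLE
      _ ≤ √(b - a) * √(∫ s in Ioc a b, ‖u' s‖ ^ 2) :=
          hvolume ▸ integral_norm_le_sqrt_measureReal_mul_sqrt_integral_sq hu.memLp
      _ ≤ √(b - a) * w2Norm a b u u' := by gcongr
  rw [hu.eq_add_integral t ht, add_mul, one_mul]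
  exact norm_add_le_of_le hinit hprimitive

lemma tendstoUniformlyOn_of_tendsto_w2Norm {ι : Type*} {l : Filter ι} {U U' : ι → ℝ → E}
    (hU : ∀ i, HasW2Deriv a b (U i) (U' i)) (hu : HasW2Deriv a b u u')
    (hlim : Tendsto (fun i => w2Norm a b (fun t => U i t - u t) fun t => U' i t - u' t) l (𝓝 0)) :
    TendstoUniformlyOn U u l (Icc a b) := by
  rw [Metric.tendstoUniformlyOn_iff]
  intro ε hε
  have hbound := hlim.const_mul (1 + √(b - a))
  rw [mul_zero] at hbound
  filter_upwards [hbound.eventually_lt_const hε] with i hi t ht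
  rw [dist_comm, dist_eq_norm]
  exact (((hU i).sub hu).norm_le ht).trans_lt hi

end Sobolev

section UniformConvergence

variable {ι : Type*} {l : Filter ι}

lemma tendsto_zero_and_of_tendsto_add_zero {f g : ι → ℝ} (hf : ∀ i, 0 ≤ f i) (hg : ∀ i, 0 ≤ g i)
    (hfg : Tendsto (fun i => f i + g i) l (𝓝 0)) : Tendsto f l (𝓝 0) ∧ Tendsto g l (𝓝 0) :=
  ⟨squeeze_zero hf (fun i => le_add_of_nonneg_right (hg i)) hfg,
    squeeze_zero hg (fun i => le_add_of_nonneg_left (hf i)) hfg⟩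

lemma tendsto_iSup_norm_sub_of_tendstoUniformlyOn {α E : Type*} [SeminormedAddCommGroup E]
    {s : Set α} {F : ι → α → E} {f : α → E} (hF : TendstoUniformlyOn F f l s) :
    Tendsto (fun i => ⨆ t : s, ‖F i t.1 - f t.1‖) l (𝓝 0) := by
  rw [Metric.tendstoUniformlyOn_iff] at hF
  rw [Metric.tendsto_nhds]
  intro ε hε
  filter_upwards [hF (ε / 2) (half_pos hε)] with i hi
  rw [Real.dist_0_eq_abs, abs_of_nonneg (Real.iSup_nonneg fun _ => norm_nonneg _)]
  refine (Real.iSup_le (fun t => ?_) (half_pos hε).le).trans_lt (half_lt_self hε)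
  rw [← dist_eq_norm, dist_comm]
  exact (hi t t.2).le

lemma tendstoUniformlyOn_parameter_of_modulus {X Z Θ : Type*} [SeminormedAddCommGroup X]
    [SeminormedAddCommGroup Z] [SeminormedAddCommGroup Θ] {A : Set ℝ} {S : Set Θ}
    {h : ℝ → X → Z → Θ → Z} {θ : Θ} {ρ : ℝ → ℝ} (hS : S ∈ 𝓝 θ) (hρ : Tendsto ρ (𝓝[>] 0) (𝓝 0))
    (hh : ∀ ε > 0, ∀ t ∈ A, ∀ t' ∈ A, ∀ (u u' : X) (v v' : Z) (c c' : Θ), c ∈ S → c' ∈ S →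
      |t - t'| ≤ ε → ‖u - u'‖ ≤ ε → ‖v - v'‖ ≤ ε → ‖c - c'‖ ≤ ε →
      ‖h t u v c - h t' u' v' c'‖ ≤ ρ ε) :
    TendstoUniformlyOn (fun c (p : ℝ × X × Z) => h p.1 p.2.1 p.2.2 c)
      (fun p => h p.1 p.2.1 p.2.2 θ) (𝓝 θ) (A ×ˢ univ) := by
  rw [Metric.tendstoUniformlyOn_iff]
  intro ε hε
  obtain ⟨δ, hρδ, hδ⟩ := ((hρ.eventually_lt_const hε).and self_mem_nhdsWithin).exists
  have hδ₀ : 0 ≤ δ := le_of_lt hδ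
  filter_upwards [hS, Metric.closedBall_mem_nhds θ hδ] with c hcS hcδ
  rintro ⟨t, u, v⟩ ⟨ht, -⟩
  rw [Metric.mem_closedBall', dist_eq_norm] at hcδ
  rw [dist_eq_norm]
  exact (hh δ hδ t ht t ht u u v v θ c (mem_of_mem_nhds hS) hcS (by simpa) (by simpa) (by simpa)
    hcδ).trans_lt hρδ

lemma tendstoUniformlyOn_comp_input_parameter {T X V Z Θ : Type*} [PseudoMetricSpace X]
    [PseudoMetricSpace Z] [TopologicalSpace Θ] {A : Set T} {h : T → X → V → Θ → Z} {θ : Θ}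
    {K : NNReal}
    (hlip : ∀ t ∈ A, ∀ v, LipschitzWith K fun a => h t a v θ)
    (hh : TendstoUniformlyOn (fun ϑ (p : T × X × V) => h p.1 p.2.1 p.2.2 ϑ)
      (fun p => h p.1 p.2.1 p.2.2 θ) (𝓝 θ) (A ×ˢ univ))
    {x : T → X} {xt : ι → T → X} (hx : TendstoUniformlyOn xt x l A)
    {ϑ : ι → Θ} (hϑ : Tendsto ϑ l (𝓝 θ)) :
    TendstoUniformlyOn (fun i (p : T × V) => h p.1 (xt i p.1) p.2 (ϑ i))
      (fun p => h p.1 (x p.1) p.2 θ) l (A ×ˢ univ) := by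
  rw [Metric.tendstoUniformlyOn_iff] at hh hx ⊢
  intro ε hε
  obtain ⟨δ, hδ, hKδ⟩ := exists_pos_mul_lt (half_pos hε) (K : ℝ)
  filter_upwards [hx δ hδ, hϑ.eventually (hh (ε / 2) (half_pos hε))] with i hi_x hi_ϑ
  rintro ⟨t, v⟩ ⟨ht, -⟩
  calc dist (h t (x t) v θ) (h t (xt i t) v (ϑ i))
      ≤ dist (h t (x t) v θ) (h t (xt i t) v θ) +
          dist (h t (xt i t) v θ) (h t (xt i t) v (ϑ i)) := dist_triangle _ _ _
    _ < ε / 2 + ε / 2 := by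
        refine add_lt_add (lt_of_le_of_lt ?_ hKδ) (hi_ϑ (t, xt i t, v) ⟨ht, mem_univ _⟩)
        exact (hlip t ht v).dist_le_mul_of_le (hi_x t ht).le
    _ = ε := add_halves ε

end UniformConvergence

theorem stmt6_general {ι X Z Θ : Type*} [NormedAddCommGroup X] [NormedSpace ℝ X]
    [NormedAddCommGroup Z] [NormedSpace ℝ Z] [CompleteSpace Z] [SeminormedAddCommGroup Θ]
    {l : Filter ι} {a b : ℝ} (hab : a ≤ b) {N : ι → ℕ} {t : ι → ℕ → ℝ}
    (ht : ∀ i, IsPartition a b (N i) (t i))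
    (hmesh : Tendsto (fun i => mesh (N i) (t i)) l (𝓝 0))
    {h : ℝ → X → Z → Θ → Z} {θ : Θ} {L : ℝ}
    (hcont : ContinuousOn (fun p : ℝ × X × Z => h p.1 p.2.1 p.2.2 θ) (Icc a b ×ˢ univ))
    (hlip : ∀ s ∈ Icc a b, ∀ u u' v v',
      ‖h s u v θ - h s u' v' θ‖ ≤ L * (‖u - u'‖ + ‖v - v'‖))
    (hunif : TendstoUniformlyOn (fun ϑ (p : ℝ × X × Z) => h p.1 p.2.1 p.2.2 ϑ)
      (fun p => h p.1 p.2.1 p.2.2 θ) (𝓝 θ) (Icc a b ×ˢ univ))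
    {x x' : ℝ → X} (hx : HasW2Deriv a b x x')
    {xt d : ι → ℝ → X} (hxt : ∀ i, HasW2Deriv a b (xt i) (d i))
    {z₀ : Z} {ζ : ι → Z} {ϑ : ι → Θ}
    (hconv : Tendsto (fun i => w2Norm a b (fun s => xt i s - x s) (fun s => d i s - x' s) +
      ‖ζ i - z₀‖ + ‖ϑ i - θ‖) l (𝓝 0))
    {zt : ι → ℝ → Z}
    (hzt : ∀ i, IsEulerPath (fun s v => h s (xt i s) v (ϑ i)) (N i) (t i) (ζ i) (zt i))
    {z : ℝ → Z} (hzc : ContinuousOn z (Icc a b))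
    (hz : ∀ s ∈ Icc a b, z s = z₀ + ∫ r in Ioc a s, h r (x r) (z r) θ) :
    TendstoUniformlyOn zt z l (Icc a b) := by
  obtain ⟨hxζ, hϑ⟩ := tendsto_zero_and_of_tendsto_add_zero
    (fun i => add_nonneg (Real.sqrt_nonneg _) (norm_nonneg _)) (fun i => norm_nonneg _) hconv
  obtain ⟨hxt_lim, hζ⟩ := tendsto_zero_and_of_tendsto_add_zero
    (fun i => Real.sqrt_nonneg _) (fun i => norm_nonneg _) hxζ
  have hza : z a = z₀ := by simpa using hz a (left_mem_Icc.2 hab)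
  have hfz : ContinuousOn (fun s => h s (x s) (z s) θ) (Icc a b) :=
    hcont.comp (continuousOn_id.prodMk (hx.continuousOn.prodMk hzc)) fun s hs => ⟨hs, mem_univ _⟩
  have hlip_input : ∀ s ∈ Icc a b, ∀ v, LipschitzWith L.toNNReal fun u => h s u v θ :=
    fun s hs v => LipschitzWith.of_dist_le' fun u u' => by
      simpa [dist_eq_norm] using hlip s hs u u' v v
  have hlip_state : ∀ s ∈ Icc a b, LipschitzWith L.toNNReal fun v => h s (x s) v θ :=
    fun s hs => LipschitzWith.of_dist_le' fun v v' => by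
      simpa [dist_eq_norm] using hlip s hs (x s) (x s) v v'
  have hfield := tendstoUniformlyOn_comp_input_parameter hlip_input hunif
    (tendstoUniformlyOn_of_tendsto_w2Norm hxt hx hxt_lim) (tendsto_iff_norm_sub_tendsto_zero.2 hϑ)
  exact tendstoUniformlyOn_of_isEulerPath hzt ht hmesh hlip_state hfz
    (hasDerivWithinAt_of_eq_add_setIntegral hfz hz) hfield
    (hza ▸ tendsto_iff_norm_sub_tendsto_zero.2 hζ)

/-- convergence of Euler-discretized clean-state paths: if
`(x̃_i, ζ_i, ϑ_i) → (x, z₀, θ)` with `θ ∈ int S`, then the associated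
Euler-discretized clean-state paths `z̃_i` converge, in supremum norm, to the unique
solution `z` of `ż = h(t, x, z, θ)`, `z(0) = z₀`. Piecewise linear `x̃_i ∈ PL(𝒫_i)`
are encoded by their piecewise constant derivatives `d i`; the `W²` function `x`
by the pair `(x, x')`. -/
theorem stmt6 {n q m : ℕ} (tf : ℝ) (htf : 0 < tf)
    (N : ℕ → ℕ) (hN1 : ∀ i, 1 ≤ N i) (tP : ℕ → ℕ → ℝ)
    (htP0 : ∀ i, tP i 0 = 0) (htPN : ∀ i, tP i (N i) = tf)
    (htPmono : ∀ i, ∀ k < N i, tP i k < tP i (k + 1))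
    (hnested : ∀ i, ∀ k ≤ N i, ∃ k' ≤ N (i + 1), tP (i + 1) k' = tP i k)
    (hmesh : Tendsto (fun i => ⨆ k : Fin (N i), (tP i (k.1 + 1) - tP i k.1))
      atTop (nhds 0))
    (S : Set (EuclideanSpace ℝ (Fin m)))
    (h : ℝ → EuclideanSpace ℝ (Fin n) → EuclideanSpace ℝ (Fin q) →
      EuclideanSpace ℝ (Fin m) → EuclideanSpace ℝ (Fin q))
    (hhc : Continuous fun p : ℝ × EuclideanSpace ℝ (Fin n) × EuclideanSpace ℝ (Fin q) ×
      EuclideanSpace ℝ (Fin m) => h p.1 p.2.1 p.2.2.1 p.2.2.2)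
    (ρh : ℝ → ℝ) (hρh : Tendsto ρh (nhdsWithin 0 (Ioi 0)) (nhds 0))
    (hhu : ∀ ε > (0:ℝ), ∀ t ∈ Icc (0:ℝ) tf, ∀ t' ∈ Icc (0:ℝ) tf,
      ∀ (a a' : EuclideanSpace ℝ (Fin n)) (b b' : EuclideanSpace ℝ (Fin q))
        (c c' : EuclideanSpace ℝ (Fin m)), c ∈ S → c' ∈ S →
      |t - t'| ≤ ε → ‖a - a'‖ ≤ ε → ‖b - b'‖ ≤ ε → ‖c - c'‖ ≤ ε →
      ‖h t a b c - h t' a' b' c'‖ ≤ ρh ε)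
    (Lh : EuclideanSpace ℝ (Fin m) → ℝ) (hLh : ∀ θ ∈ S, 0 < Lh θ)
    (hhLip : ∀ θ ∈ S, ∀ t ∈ Icc (0:ℝ) tf,
      ∀ (a a' : EuclideanSpace ℝ (Fin n)) (b b' : EuclideanSpace ℝ (Fin q)),
      ‖h t a b θ - h t a' b' θ‖ ≤ Lh θ * (‖a - a'‖ + ‖b - b'‖))
    -- the limit point
    (x x' : ℝ → EuclideanSpace ℝ (Fin n))
    (hInt : IntegrableOn x' (Icc 0 tf))
    (hL2 : IntegrableOn (fun t => ‖x' t‖ ^ 2) (Icc 0 tf))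
    (hAC : ∀ t ∈ Icc (0:ℝ) tf, x t = x 0 + ∫ s in Ioc (0:ℝ) t, x' s)
    (z0 : EuclideanSpace ℝ (Fin q))
    (θ : EuclideanSpace ℝ (Fin m)) (hθ : θ ∈ interior S)
    -- the approximating sequence
    (xt d : ℕ → ℝ → EuclideanSpace ℝ (Fin n))
    (hdpc : ∀ i, ∀ k < N i, ∃ b : EuclideanSpace ℝ (Fin n),
      ∀ s ∈ Ico (tP i k) (tP i (k + 1)), d i s = b)
    (hxtAC : ∀ i, ∀ s ∈ Icc (0:ℝ) tf, xt i s = xt i 0 + ∫ u in Ioc (0:ℝ) s, d i u)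
    (ζ : ℕ → EuclideanSpace ℝ (Fin q)) (ϑ : ℕ → EuclideanSpace ℝ (Fin m))
    (hconv : Tendsto (fun i =>
      Real.sqrt (‖xt i 0 - x 0‖ ^ 2 + ∫ s in Ioc (0:ℝ) tf, ‖d i s - x' s‖ ^ 2)
      + ‖ζ i - z0‖ + ‖ϑ i - θ‖) atTop (nhds 0))
    -- the Euler-discretized clean-state paths
    (zt : ℕ → ℝ → EuclideanSpace ℝ (Fin q))
    (hzt0 : ∀ i, zt i 0 = ζ i)
    (hztrec : ∀ i, ∀ k < N i, ∀ s ∈ Ioc (tP i k) (tP i (k + 1)),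
      zt i s = zt i (tP i k) +
        (s - tP i k) • h (tP i k) (xt i (tP i k)) (zt i (tP i k)) (ϑ i))
    -- the limit clean-state path: solution of the IVP
    (z : ℝ → EuclideanSpace ℝ (Fin q)) (hzc : ContinuousOn z (Icc 0 tf))
    (hz : ∀ t ∈ Icc (0:ℝ) tf, z t = z0 + ∫ s in Ioc (0:ℝ) t, h s (x s) (z s) θ) :
    Tendsto (fun i => ⨆ t : Icc (0:ℝ) tf, ‖zt i t.1 - z t.1‖) atTop (nhds 0) := by
  have hθS : θ ∈ S := interior_subset hθ
  have hpart : ∀ i, IsPartition 0 tf (N i) (tP i) := fun i => ⟨htP0 i, htPN i, htPmono i⟩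
  exact tendsto_iSup_norm_sub_of_tendstoUniformlyOn <| stmt6_general htf.le hpart hmesh
    (hhc.comp₄ continuous_fst (by fun_prop) (by fun_prop) continuous_const).continuousOn
    (hhLip θ hθS)
    (tendstoUniformlyOn_parameter_of_modulus (mem_interior_iff_mem_nhds.1 hθ) hρh hhu)
    (hasW2Deriv_of_integrableOn hInt hL2 hAC)
    (fun i => (hpart i).hasW2Deriv_of_piecewise_const (hdpc i) (hxtAC i)) hconv
    (fun i => ⟨by rw [htP0, hzt0], hztrec i⟩) hzc hz
end
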